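/- Let α, β be real numbers with −|a| < α < β < |a|. Then lim_{n→∞} Σ_{y ∈ ℤ, α ≤ y/n ≤ β} p_n(φ; y) = ∫_α^β ρ(ξ) dξ, where ρ(ξ) = |b|(1 + λ_A(φ)ξ)/(π(1 − ξ²)√(|a|² − ξ²)). -/

import Mathlib

open Filter Topology Asymptotics MeasureTheory

noncomputable section

/-- One step of the (column-decomposition) quantum walk `U` on functions `ℤ → ℂ²`:
`(Uf)(x) = P f(x+1) + Q f(x-1)` with `P = [[a,0],[-conj b,0]]`, `Q = [[0,b],[0,conj a]]`. -/
def qwStep (a b : ℂ) (f : ℤ → ℂ × ℂ) : ℤ → ℂ × ℂ := fun x =>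
  (a * (f (x + 1)).1 + b * (f (x - 1)).2,
   -(starRingEnd ℂ) b * (f (x + 1)).1 + (starRingEnd ℂ) a * (f (x - 1)).2)

/-- `δ₀ ⊗ φ : ℤ → ℂ²`. -/
def qwDelta (φ : ℂ × ℂ) : ℤ → ℂ × ℂ := fun x => if x = 0 then φ else 0

/-- Squared norm of a vector in `ℂ²`. -/
def nsq (u : ℂ × ℂ) : ℝ := ‖u.1‖ ^ 2 + ‖u.2‖ ^ 2

/-- Transition probability `p_n(φ; y) = ‖(Uⁿ(δ₀ ⊗ φ))(y)‖²`. -/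
def qwP (a b : ℂ) (φ : ℂ × ℂ) (n : ℕ) (y : ℤ) : ℝ :=
  nsq (((qwStep a b)^[n] (qwDelta φ)) y)

/-- `λ_A(φ) = |φ₂|² − |φ₁|² + (1/|a|²)(ab conj(φ₁)φ₂ + conj(ab) φ₁ conj(φ₂))` (a real number). -/
def lamA (a b : ℂ) (φ : ℂ × ℂ) : ℝ :=
  ‖φ.2‖ ^ 2 - ‖φ.1‖ ^ 2 +
    (a * b * (starRingEnd ℂ) φ.1 * φ.2 +
      (starRingEnd ℂ) a * (starRingEnd ℂ) b * φ.1 * (starRingEnd ℂ) φ.2).re / ‖a‖ ^ 2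

/-- `μ(t) = arccos(|a| cos t)`. -/
def muF (a : ℂ) (t : ℝ) : ℝ := Real.arccos (‖a‖ * Real.cos t)

/-- `t(η) = arcsin(|b|η/(|a|√(1 − η²)))`. -/
def tF (a b : ℂ) (η : ℝ) : ℝ := Real.arcsin (‖b‖ * η / (‖a‖ * Real.sqrt (1 - η ^ 2)))

/-- `θ(η) = 2μ(t(η)) − 2η t(η)`. -/
def thetaF (a b : ℂ) (η : ℝ) : ℝ := 2 * muF a (tF a b η) - 2 * η * tF a b η

/-!
In momentum space the walk is multiplication by an `SU(2)` matrix. Once the momentum is shifted by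
`arg a`, its eigenvalues are `e^{±iμ(t)}` with `cos μ(t) = ‖a‖ cos t`, so the state after `n` steps
is `cos (nμ(t)) φ + sin (nμ(t)) J(t) φ`, where `J(t) φ` has the norm of `φ` and
`Re ⟪φ, J(t) φ⟫ = 0`. By Parseval's identity the characteristic function of `X_n / n` at `ξ` is the
mean over `t` of the inner products of the states at the momenta `t` and `t + ξ / n`; their phases
differ by `n (μ(t + ξ / n) - μ(t)) → ξ v(t)`, where `v = μ'` is the group velocity, so these means
converge by dominated convergence. Symmetry in `t` reduces the limit to the characteristic function
of the image of `(1 + λ v(t)) dt / π` on `(-π/2, π/2)` under `v`, and changing variables to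
`x = v(t)` gives Konno's density. Lévy's continuity theorem and the portmanteau theorem conclude.
-/

section IntervalIntegral

variable {E : Type*} [NormedAddCommGroup E] [NormedSpace ℝ E] {f : ℝ → E}

lemma intervalIntegral_eq_zero_of_odd (hf : Function.Odd f) (c : ℝ) : ∫ t in (-c)..c, f t = 0 := by
  have hneg := intervalIntegral.integral_comp_neg (a := -c) (b := c) f
  simp_rw [hf _, neg_neg, intervalIntegral.integral_neg] at hneg
  have : IsAddTorsionFree E := .of_isTorsionFree ℝ E
  exact self_eq_neg.1 hneg.symm

lemma intervalIntegral_eq_two_smul_of_periodic {c : ℝ}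
    (hf : ∀ x y, IntervalIntegrable f volume x y) (hper : Function.Periodic f (2 * c))
    (hsymm : ∀ t, f (c - t) = f t) :
    ∫ t in (-c)..c, f t = (2 : ℝ) • ∫ t in (-(c / 2))..(c / 2), f t := by
  have hreflect : ∫ t in (c / 2)..(3 * c / 2), f t = ∫ t in (-(c / 2))..(c / 2), f t := by
    have hcomp := intervalIntegral.integral_comp_sub_left (a := -(c / 2)) (b := c / 2) f c
    simp_rw [hsymm] at hcomp
    rw [hcomp]
    congr 1 <;> ring
  calc ∫ t in (-c)..c, f t
      = ∫ t in (-c)..(-c + 2 * c), f t := by ring_nf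
    _ = ∫ t in (-(c / 2))..(-(c / 2) + 2 * c), f t := hper.intervalIntegral_add_eq _ _
    _ = ∫ t in (-(c / 2))..(3 * c / 2), f t := by ring_nf
    _ = (2 : ℝ) • ∫ t in (-(c / 2))..(c / 2), f t := by
        rw [← intervalIntegral.integral_add_adjacent_intervals (hf _ (c / 2)) (hf _ _), hreflect,
          two_smul]

end IntervalIntegral

open scoped InnerProductSpace ComplexConjugate

section FourierSum

section Module

variable {E F : Type*} [AddCommGroup E] [Module ℂ E] [AddCommGroup F] [Module ℂ F]

/-- The trigonometric polynomial `∑ₓ e^{itx} f(x)` with coefficients `f`, which are meant to be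
finitely supported (otherwise the sum may be the junk value `0`). -/
def fourierSum (f : ℤ → E) (t : ℝ) : E := ∑ᶠ x : ℤ, Complex.exp (t * x * Complex.I) • f x

lemma fourierSum_eq_sum {f : ℤ → E} {S : Finset ℤ} (hf : Function.support f ⊆ S) (t : ℝ) :
    fourierSum f t = ∑ x ∈ S, Complex.exp (t * x * Complex.I) • f x :=
  finsum_eq_sum_of_support_subset _ ((Function.support_smul_subset_right _ _).trans hf)

lemma map_fourierSum (L : E →ₗ[ℂ] F) {f : ℤ → E} (hf : f.HasFiniteSupport) (t : ℝ) :
    L (fourierSum f t) = fourierSum (fun x => L (f x)) t := by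
  simp only [fourierSum, ← map_smul]
  exact map_finsum L (hf.subset (Function.support_smul_subset_right _ _))

lemma fourierSum_comp_add_right (f : ℤ → E) (c : ℤ) (t : ℝ) :
    fourierSum (fun x => f (x + c)) t = Complex.exp (-(t * c * Complex.I)) • fourierSum f t := by
  rw [fourierSum, fourierSum, smul_finsum]
  refine (finsum_congr fun x => ?_).trans (finsum_comp_equiv (Equiv.addRight c))
  rw [Equiv.coe_addRight, smul_smul, ← Complex.exp_add]
  congr 2
  push_cast
  ring

lemma fourierSum_add_right (f : ℤ → E) (t η : ℝ) :
    fourierSum f (t + η) = fourierSum (fun x => Complex.exp (η * x * Complex.I) • f x) t := by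
  refine finsum_congr fun x => ?_
  rw [smul_smul, ← Complex.exp_add]
  congr 2
  push_cast
  ring

end Module

lemma integral_exp_int_mul_I (m : ℤ) :
    ∫ t in (-Real.pi)..Real.pi, Complex.exp (t * m * Complex.I) =
      if m = 0 then 2 * (Real.pi : ℂ) else 0 := by
  split_ifs with hm
  · simp only [hm, Int.cast_zero, mul_zero, zero_mul, Complex.exp_zero,
      intervalIntegral.integral_const, Complex.real_smul]
    push_cast
    ring
  · have hne : (m : ℂ) * Complex.I ≠ 0 := mul_ne_zero (Int.cast_ne_zero.2 hm) Complex.I_ne_zero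
    have hperiod : Complex.exp (m * Complex.I * (Real.pi : ℝ)) =
        Complex.exp (m * Complex.I * (-Real.pi : ℝ)) :=
      Complex.exp_eq_exp_iff_exists_int.2 ⟨m, by push_cast; ring⟩
    simp_rw [mul_assoc, mul_comm ((_ : ℝ) : ℂ)]
    rw [integral_exp_mul_complex hne, hperiod, sub_self, zero_div]

section InnerProductSpace

variable {E : Type*} [NormedAddCommGroup E] [InnerProductSpace ℂ E]

lemma continuous_fourierSum {f : ℤ → E} (hf : f.HasFiniteSupport) : Continuous (fourierSum f) := by
  rw [funext (fourierSum_eq_sum (Set.Finite.coe_toFinset hf).ge)]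
  fun_prop

lemma integral_inner_fourierSum {f g : ℤ → E} {S : Finset ℤ} (hf : Function.support f ⊆ S)
    (hg : Function.support g ⊆ S) :
    ∫ t in (-Real.pi)..Real.pi, ⟪fourierSum f t, fourierSum g t⟫_ℂ =
      2 * Real.pi * ∑ x ∈ S, ⟪f x, g x⟫_ℂ := by
  have hexpand (t : ℝ) : ⟪fourierSum f t, fourierSum g t⟫_ℂ =
      ∑ x ∈ S, ∑ y ∈ S, ⟪f x, g y⟫_ℂ * Complex.exp (t * (y - x : ℤ) * Complex.I) := by
    rw [fourierSum_eq_sum hf, fourierSum_eq_sum hg, sum_inner]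
    refine Finset.sum_congr rfl fun x _ => ?_
    rw [inner_sum]
    refine Finset.sum_congr rfl fun y _ => ?_
    have hexp : Complex.exp (t * (y - x : ℤ) * Complex.I) =
        conj (Complex.exp (t * x * Complex.I)) * Complex.exp (t * y * Complex.I) := by
      rw [← Complex.exp_conj, ← Complex.exp_add]
      simp only [map_mul, Complex.conj_ofReal, Complex.conj_I, map_intCast]
      congr 1
      push_cast
      ring
    rw [inner_smul_left, inner_smul_right, hexp]
    ring
  simp_rw [hexpand]
  rw [intervalIntegral.integral_finsetSum fun x _ =>
    Continuous.intervalIntegrable (by fun_prop) _ _, Finset.mul_sum]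
  refine Finset.sum_congr rfl fun x hx => ?_
  rw [intervalIntegral.integral_finsetSum fun y _ =>
    Continuous.intervalIntegrable (by fun_prop) _ _]
  simp only [intervalIntegral.integral_const_mul, integral_exp_int_mul_I, sub_eq_zero, mul_ite,
    mul_zero, Finset.sum_ite_eq', hx, if_true]
  ring

lemma integral_inner_fourierSum_add_right {f : ℤ → E} {S : Finset ℤ}
    (hf : Function.support f ⊆ S) (γ η : ℝ) :
    ∫ t in (-Real.pi)..Real.pi, ⟪fourierSum f (t + γ), fourierSum f (t + η + γ)⟫_ℂ =
      2 * Real.pi * ∑ x ∈ S, (‖f x‖ ^ 2 : ℝ) * Complex.exp (η * x * Complex.I) := by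
  have hsupport (c : ℝ) :
      (Function.support fun x : ℤ => Complex.exp (c * x * Complex.I) • f x) ⊆ S :=
    (Function.support_smul_subset_right _ _).trans hf
  simp_rw [add_assoc, fourierSum_add_right f]
  rw [integral_inner_fourierSum (hsupport _) (hsupport _)]
  congr 1
  refine Finset.sum_congr rfl fun x _ => ?_
  have hexp : conj (Complex.exp (γ * x * Complex.I)) * Complex.exp ((η + γ : ℝ) * x * Complex.I) =
      Complex.exp (η * x * Complex.I) := by
    rw [← Complex.exp_conj, ← Complex.exp_add]
    simp only [map_mul, Complex.conj_ofReal, Complex.conj_I, map_intCast]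
    congr 1
    push_cast
    ring
  have hself : ⟪f x, f x⟫_ℂ = ‖f x‖ ^ 2 := inner_self_eq_norm_sq_to_K (f x)
  rw [inner_smul_left, inner_smul_right, hself, ← hexp]
  push_cast
  ring

end InnerProductSpace

end FourierSum

section Sinusoid

variable {E : Type*} [NormedAddCommGroup E] [InnerProductSpace ℂ E]

/-- The sinusoid `cos θ u + sin θ w`, the form taken by the powers of a unitary operator
with eigenvalues `e^{±iθ}`. -/
def sinusoid (u w : E) (θ : ℝ) : E := (Real.cos θ : ℂ) • u + (Real.sin θ : ℂ) • w

/-- The vectors `u` and `w` have the same norm and are orthogonal for the real inner product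
`Re ⟪u, w⟫`, so that `sinusoid u w` runs along a circle. -/
structure InQuadrature (u w : E) : Prop where
  norm_eq : ‖w‖ = ‖u‖
  inner_swap : ⟪w, u⟫_ℂ = -⟪u, w⟫_ℂ

lemma InQuadrature.inner_sinusoid {u w : E} (h : InQuadrature u w) (θ θ' : ℝ) :
    ⟪sinusoid u w θ, sinusoid u w θ'⟫_ℂ =
      Real.cos (θ' - θ) * ‖u‖ ^ 2 + Real.sin (θ' - θ) * ⟪u, w⟫_ℂ := by
  have hu : ⟪u, u⟫_ℂ = ‖u‖ ^ 2 := inner_self_eq_norm_sq_to_K u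
  have hw : ⟪w, w⟫_ℂ = ‖u‖ ^ 2 := by rw [← h.norm_eq]; exact inner_self_eq_norm_sq_to_K w
  simp only [sinusoid, inner_add_left, inner_add_right, inner_smul_left, inner_smul_right,
    Complex.conj_ofReal, hu, hw, h.inner_swap, Real.cos_sub, Real.sin_sub, Complex.ofReal_add,
    Complex.ofReal_sub, Complex.ofReal_mul]
  ring

lemma InQuadrature.norm_sinusoid {u w : E} (h : InQuadrature u w) (θ : ℝ) :
    ‖sinusoid u w θ‖ = ‖u‖ := by
  have hsq : ((‖sinusoid u w θ‖ ^ 2 : ℝ) : ℂ) = (‖u‖ ^ 2 : ℝ) := by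
    simpa [inner_self_eq_norm_sq_to_K] using h.inner_sinusoid θ θ
  exact (sq_eq_sq₀ (norm_nonneg _) (norm_nonneg _)).1 (Complex.ofReal_injective hsq)

lemma InQuadrature.norm_inner_le {u w : E} (h : InQuadrature u w) : ‖⟪u, w⟫_ℂ‖ ≤ ‖u‖ ^ 2 := by
  simpa only [h.norm_eq, sq] using norm_inner_le_norm (𝕜 := ℂ) u w

lemma norm_sinusoid_sub_sinusoid_le (u w w' : E) (θ : ℝ) :
    ‖sinusoid u w' θ - sinusoid u w θ‖ ≤ ‖w' - w‖ := by
  rw [sinusoid, sinusoid, add_sub_add_left_eq_sub, ← smul_sub, norm_smul, Complex.norm_real]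
  exact mul_le_of_le_one_left (norm_nonneg _) (Real.abs_sin_le_one θ)

lemma tendsto_natCast_mul_sub_natCast_mul {θ : ℝ → ℝ} {v t : ℝ} (hθ : HasDerivAt θ v t) (ξ : ℝ) :
    Tendsto (fun n : ℕ => n * θ (t + ξ / n) - n * θ t) atTop (𝓝 (ξ * v)) := by
  have hlim := hθ.hasFDerivAt.lim ξ (c := fun n : ℕ => (n : ℝ)) (l := atTop)
    (tendsto_norm_atTop_atTop.comp tendsto_natCast_atTop_atTop)
  simpa [div_eq_inv_mul, mul_sub] using hlim

/-- Stationary phase in its simplest form: the fast phases `n θ` cancel up to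
`n (θ(t + ξ/n) - θ(t))`, which tends to `ξ θ'(t)`. -/
lemma tendsto_inner_sinusoid {u : E} {w : ℝ → E} {θ : ℝ → ℝ} {v t : ℝ}
    (h : InQuadrature u (w t)) (hw : ContinuousAt w t) (hθ : HasDerivAt θ v t) (ξ : ℝ) :
    Tendsto (fun n : ℕ => ⟪sinusoid u (w t) (n * θ t),
        sinusoid u (w (t + ξ / n)) (n * θ (t + ξ / n))⟫_ℂ) atTop
      (𝓝 (Real.cos (ξ * v) * ‖u‖ ^ 2 + Real.sin (ξ * v) * ⟪u, w t⟫_ℂ)) := by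
  have hmain : Tendsto (fun n : ℕ => ⟪sinusoid u (w t) (n * θ t),
      sinusoid u (w t) (n * θ (t + ξ / n))⟫_ℂ) atTop
      (𝓝 (Real.cos (ξ * v) * ‖u‖ ^ 2 + Real.sin (ξ * v) * ⟪u, w t⟫_ℂ)) := by
    simp_rw [h.inner_sinusoid]
    have hcont : Continuous fun x : ℝ =>
        (Real.cos x : ℂ) * ‖u‖ ^ 2 + (Real.sin x : ℂ) * ⟪u, w t⟫_ℂ := by fun_prop
    exact (hcont.tendsto _).comp (tendsto_natCast_mul_sub_natCast_mul hθ ξ)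
  have hw0 : Tendsto (fun n : ℕ => ‖w (t + ξ / n) - w t‖) atTop (𝓝 0) := by
    have hshift : Tendsto (fun n : ℕ => t + ξ / n) atTop (𝓝 t) := by
      simpa using (tendsto_const_div_atTop_nhds_zero_nat ξ).const_add t
    exact tendsto_iff_norm_sub_tendsto_zero.1 (hw.tendsto.comp hshift)
  have herror : Tendsto (fun n : ℕ => ⟪sinusoid u (w t) (n * θ t),
      sinusoid u (w (t + ξ / n)) (n * θ (t + ξ / n)) -
        sinusoid u (w t) (n * θ (t + ξ / n))⟫_ℂ) atTop (𝓝 0) := by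
    refine squeeze_zero_norm (fun n => ?_) (by simpa using hw0.const_mul ‖u‖)
    calc ‖⟪sinusoid u (w t) (n * θ t), sinusoid u (w (t + ξ / n)) (n * θ (t + ξ / n)) -
            sinusoid u (w t) (n * θ (t + ξ / n))⟫_ℂ‖
        ≤ ‖sinusoid u (w t) (n * θ t)‖ * ‖sinusoid u (w (t + ξ / n)) (n * θ (t + ξ / n)) -
            sinusoid u (w t) (n * θ (t + ξ / n))‖ := norm_inner_le_norm _ _
      _ ≤ ‖u‖ * ‖w (t + ξ / n) - w t‖ := by
          rw [h.norm_sinusoid]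
          gcongr
          exact norm_sinusoid_sub_sinusoid_le _ _ _ _
  simpa only [← inner_add_right, add_sub_cancel, add_zero] using hmain.add herror

/-- The vector `J u`, where `T = cos θ + sin θ J` is an operator with eigenvalues `e^{±iθ}`. -/
def quadrature (T : E →ₗ[ℂ] E) (θ : ℝ) (u : E) : E :=
  (Real.sin θ : ℂ)⁻¹ • (T u - (Real.cos θ : ℂ) • u)

variable {T : E →ₗ[ℂ] E} {θ : ℝ}

lemma map_eq_sinusoid_quadrature (hθ : Real.sin θ ≠ 0) (u : E) :
    T u = sinusoid u (quadrature T θ u) θ := by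
  rw [sinusoid, quadrature, smul_inv_smul₀ (Complex.ofReal_ne_zero.2 hθ), add_sub_cancel]

lemma iterate_eq_sinusoid (hθ : Real.sin θ ≠ 0)
    (hT : ∀ u, T (T u) = (2 * Real.cos θ : ℂ) • T u - u) (u : E) (n : ℕ) :
    T^[n] u = sinusoid u (quadrature T θ u) (n * θ) := by
  have hT' : T (quadrature T θ u) =
      (Real.cos θ : ℂ) • quadrature T θ u - (Real.sin θ : ℂ) • u := by
    have hθ' : (Real.sin θ : ℂ) ≠ 0 := Complex.ofReal_ne_zero.2 hθ
    have hsc : (Real.sin θ : ℂ) ^ 2 + (Real.cos θ : ℂ) ^ 2 = 1 := by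
      exact_mod_cast Real.sin_sq_add_cos_sq θ
    simp only [quadrature, map_smul, map_sub, hT]
    generalize (Real.sin θ : ℂ) = s, (Real.cos θ : ℂ) = c at hθ' hsc ⊢
    match_scalars
    · field_simp
      ring
    · field_simp
      linear_combination hsc
  induction n with
  | zero => simp [sinusoid]
  | succ n ih =>
    rw [Function.iterate_succ_apply', ih, sinusoid, map_add, map_smul, map_smul, hT',
      map_eq_sinusoid_quadrature hθ u, sinusoid, sinusoid, Nat.cast_succ, add_one_mul,
      Real.cos_add, Real.sin_add]
    push_cast
    module

lemma inQuadrature_quadrature (hθ : Real.sin θ ≠ 0) (hnorm : ∀ u, ‖T u‖ = ‖u‖)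
    (hT : ∀ u, T (T u) = (2 * Real.cos θ : ℂ) • T u - u) (u : E) :
    InQuadrature u (quadrature T θ u) := by
  have hθ' : (Real.sin θ : ℂ) ≠ 0 := Complex.ofReal_ne_zero.2 hθ
  have hu : ⟪u, u⟫_ℂ = ‖u‖ ^ 2 := inner_self_eq_norm_sq_to_K u
  have hTu : ⟪T u, T u⟫_ℂ = ‖u‖ ^ 2 := by
    rw [← hnorm u]; exact inner_self_eq_norm_sq_to_K _
  have htrace : ⟪T u, u⟫_ℂ + ⟪u, T u⟫_ℂ = 2 * Real.cos θ * ‖u‖ ^ 2 := by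
    have hinner : ⟪T u, T (T u)⟫_ℂ = ⟪u, T u⟫_ℂ :=
      (LinearMap.norm_map_iff_inner_map_map T).1 hnorm u (T u)
    rw [hT, inner_sub_right, inner_smul_right, hTu] at hinner
    linear_combination -hinner
  have hsc : (Real.sin θ : ℂ) ^ 2 + (Real.cos θ : ℂ) ^ 2 = 1 := by
    exact_mod_cast Real.sin_sq_add_cos_sq θ
  have hinner_self : ⟪quadrature T θ u, quadrature T θ u⟫_ℂ = ‖u‖ ^ 2 := by
    simp only [quadrature, inner_smul_left, inner_smul_right, inner_sub_left, inner_sub_right, hu,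
      hTu, map_inv₀, Complex.conj_ofReal]
    field_simp
    linear_combination -(Real.cos θ : ℂ) * htrace - ‖u‖ ^ 2 * hsc
  constructor
  · have hsq : (‖quadrature T θ u‖ ^ 2 : ℂ) = ‖u‖ ^ 2 :=
      (inner_self_eq_norm_sq_to_K _).symm.trans hinner_self
    exact (sq_eq_sq₀ (norm_nonneg _) (norm_nonneg _)).1 (by exact_mod_cast hsq)
  · simp only [quadrature, inner_smul_left, inner_smul_right, inner_sub_left, inner_sub_right, hu,
      map_inv₀, Complex.conj_ofReal]
    field_simp
    linear_combination htrace

end Sinusoid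

section Coin

/-- The spinor space `ℂ²` with its Euclidean inner product. -/
abbrev Spinor : Type := WithLp 2 (ℂ × ℂ)

@[ext]
lemma Spinor.ext {u v : Spinor} (h₁ : u.fst = v.fst) (h₂ : u.snd = v.snd) : u = v :=
  WithLp.ofLp_injective 2 (Prod.ext h₁ h₂)

lemma Spinor.norm_sq (u : Spinor) : (‖u‖ ^ 2 : ℂ) = u.fst * conj u.fst + u.snd * conj u.snd := by
  rw [Complex.mul_conj', Complex.mul_conj']
  exact_mod_cast WithLp.prod_norm_sq_eq_of_L2 u

lemma Spinor.inner_eq (u v : Spinor) :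
    ⟪u, v⟫_ℂ = v.fst * conj u.fst + v.snd * conj u.snd := rfl

/-- The operator of the matrix `[[α, β], [-conj β, conj α]]`. -/
def coin (α β : ℂ) : Spinor →ₗ[ℂ] Spinor where
  toFun u := WithLp.toLp 2 (α * u.fst + β * u.snd, -conj β * u.fst + conj α * u.snd)
  map_add' u v := by ext <;> simp <;> ring
  map_smul' c u := by ext <;> simp <;> ring

@[simp]
lemma fst_coin (α β : ℂ) (u : Spinor) : (coin α β u).fst = α * u.fst + β * u.snd := rfl

@[simp]
lemma snd_coin (α β : ℂ) (u : Spinor) :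
    (coin α β u).snd = -conj β * u.fst + conj α * u.snd := rfl

lemma norm_coin {α β : ℂ} (h : ‖α‖ ^ 2 + ‖β‖ ^ 2 = 1) (u : Spinor) : ‖coin α β u‖ = ‖u‖ := by
  have h' : α * conj α + β * conj β = 1 := by
    rw [Complex.mul_conj', Complex.mul_conj']; exact_mod_cast h
  have hsq : (‖coin α β u‖ ^ 2 : ℂ) = ‖u‖ ^ 2 := by
    simp only [Spinor.norm_sq, fst_coin, snd_coin, map_add, map_mul, map_neg, Complex.conj_conj]
    linear_combination (u.fst * conj u.fst + u.snd * conj u.snd) * h'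
  exact (sq_eq_sq₀ (norm_nonneg _) (norm_nonneg _)).1 (by exact_mod_cast hsq)

lemma coin_coin {α β : ℂ} (h : ‖α‖ ^ 2 + ‖β‖ ^ 2 = 1) (u : Spinor) :
    coin α β (coin α β u) = (2 * α.re : ℂ) • coin α β u - u := by
  have h' : α * conj α + β * conj β = 1 := by
    rw [Complex.mul_conj', Complex.mul_conj']; exact_mod_cast h
  have htrace : α + conj α = 2 * α.re := by rw [Complex.add_conj]; push_cast; rfl
  rw [← htrace]
  ext
  · simp only [fst_coin, snd_coin, WithLp.sub_fst, WithLp.smul_fst, smul_eq_mul]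
    linear_combination -u.fst * h'
  · simp only [fst_coin, snd_coin, WithLp.sub_snd, WithLp.smul_snd, smul_eq_mul]
    linear_combination -u.snd * h'

lemma inner_coin (α β : ℂ) (u : Spinor) :
    ⟪u, coin α β u⟫_ℂ = α.re * ‖u‖ ^ 2 + Complex.I * (α.im * (‖u.fst‖ ^ 2 - ‖u.snd‖ ^ 2) +
      2 * (β * conj u.fst * u.snd).im : ℝ) := by
  have hnorm (z : ℂ) : (‖z‖ ^ 2 : ℂ) = z * conj z := (Complex.mul_conj' z).symm
  have him (z : ℂ) : 2 * Complex.I * z.im = z - conj z := by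
    rw [Complex.sub_conj]; push_cast; ring
  have hre : (2 * α.re : ℂ) = α + conj α := by rw [Complex.add_conj]; push_cast; rfl
  have hβ := him (β * conj u.fst * u.snd)
  simp only [map_mul, Complex.conj_conj] at hβ
  rw [Spinor.norm_sq, Spinor.inner_eq, fst_coin, snd_coin]
  push_cast
  rw [hnorm, hnorm]
  linear_combination -hβ - (1 / 2) * (u.fst * conj u.fst + u.snd * conj u.snd) * hre -
    (1 / 2) * (u.fst * conj u.fst - u.snd * conj u.snd) * him α

end Coin

section Momentum

lemma support_qwStep_iterate (a b : ℂ) (φ : ℂ × ℂ) (n : ℕ) :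
    Function.support ((qwStep a b)^[n] (qwDelta φ)) ⊆ Finset.Icc (-n : ℤ) n := by
  induction n with
  | zero =>
    refine Function.support_subset_iff'.2 fun x hx => if_neg ?_
    rintro rfl
    simp at hx
  | succ n ih =>
    refine Function.support_subset_iff'.2 fun x hx => ?_
    have hx' : ¬ (-(n + 1 : ℤ) ≤ x ∧ x ≤ n + 1) := by simpa using hx
    have hvanish (y : ℤ) (hy : y = x + 1 ∨ y = x - 1) :
        (qwStep a b)^[n] (qwDelta φ) y = 0 :=
      Function.support_subset_iff'.1 ih y (by simp; omega)
    rw [Function.iterate_succ_apply', qwStep, hvanish _ (.inl rfl), hvanish _ (.inr rfl)]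
    simp

lemma hasFiniteSupport_qwStep_iterate (a b : ℂ) (φ : ℂ × ℂ) (n : ℕ) :
    ((qwStep a b)^[n] (qwDelta φ)).HasFiniteSupport :=
  (Finset.finite_toSet _).subset (support_qwStep_iterate a b φ n)

/-- The Fourier symbol of the walk operator `qwStep a b`. -/
def momentumCoin (a b : ℂ) (t : ℝ) : Spinor →ₗ[ℂ] Spinor :=
  coin (a * Complex.exp (-(t * Complex.I))) (b * Complex.exp (t * Complex.I))

/-- The Fourier transform of the state of the walk after `n` steps. -/
def momentumState (a b : ℂ) (φ : ℂ × ℂ) (n : ℕ) (t : ℝ) : Spinor :=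
  fourierSum (fun x => WithLp.toLp 2 ((qwStep a b)^[n] (qwDelta φ) x)) t

lemma fourierSum_qwStep (a b : ℂ) {f : ℤ → ℂ × ℂ} (hf : f.HasFiniteSupport) (t : ℝ) :
    fourierSum (fun x => (WithLp.toLp 2 (qwStep a b f x) : Spinor)) t =
      momentumCoin a b t (fourierSum (fun x => WithLp.toLp 2 (f x)) t) := by
  let g : ℤ → ℂ × ℂ := fun x => ((f (x + 1)).1, (f (x + -1)).2)
  have hshift (c : ℤ) : (fun x => f (x + c)).HasFiniteSupport :=
    Set.Finite.preimage (add_left_injective c).injOn hf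
  have hg : g.HasFiniteSupport := .sumMk (hshift 1).fst (hshift (-1)).snd
  have hfst {h : ℤ → ℂ × ℂ} (hh : h.HasFiniteSupport) :
      (fourierSum (fun x => (WithLp.toLp 2 (h x) : Spinor)) t).fst =
        fourierSum (fun x => (h x).1) t :=
    map_fourierSum (WithLp.fstₗ 2 ℂ ℂ ℂ) (hh.fun_comp rfl) t
  have hsnd {h : ℤ → ℂ × ℂ} (hh : h.HasFiniteSupport) :
      (fourierSum (fun x => (WithLp.toLp 2 (h x) : Spinor)) t).snd =
        fourierSum (fun x => (h x).2) t :=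
    map_fourierSum (WithLp.sndₗ 2 ℂ ℂ ℂ) (hh.fun_comp rfl) t
  calc fourierSum (fun x => (WithLp.toLp 2 (qwStep a b f x) : Spinor)) t
      = coin a b (fourierSum (fun x => WithLp.toLp 2 (g x)) t) :=
        (map_fourierSum (coin a b) (hg.fun_comp rfl) t).symm
    _ = momentumCoin a b t (fourierSum (fun x => WithLp.toLp 2 (f x)) t) := by
        have h₁ := fourierSum_comp_add_right (fun x => (f x).1) 1 t
        have h₂ := fourierSum_comp_add_right (fun x => (f x).2) (-1) t
        ext
        · simp only [momentumCoin, fst_coin, hfst hf, hsnd hf, hfst hg, hsnd hg, g, h₁, h₂]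
          simp only [Int.cast_one, mul_one, smul_eq_mul, Int.cast_neg, mul_neg, neg_mul, neg_neg]
          ring
        · simp only [momentumCoin, snd_coin, hfst hf, hsnd hf, hfst hg, hsnd hg, g, h₁, h₂]
          simp only [Int.cast_one, mul_one, smul_eq_mul, neg_mul, Int.cast_neg, mul_neg, neg_neg,
            map_mul, ← Complex.exp_conj, Complex.conj_ofReal, Complex.conj_I, map_neg]
          ring

lemma momentumState_eq_iterate (a b : ℂ) (φ : ℂ × ℂ) (n : ℕ) (t : ℝ) :
    momentumState a b φ n t = (momentumCoin a b t)^[n] (WithLp.toLp 2 φ) := by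
  induction n with
  | zero =>
    rw [momentumState, fourierSum, finsum_eq_single _ 0 fun x hx => by simp [qwDelta, hx]]
    simp [qwDelta]
  | succ n ih =>
    rw [Function.iterate_succ_apply', ← ih, momentumState]
    simp_rw [Function.iterate_succ_apply' (qwStep a b)]
    exact fourierSum_qwStep a b (hasFiniteSupport_qwStep_iterate a b φ n) t

end Momentum

section Dispersion

variable {a : ℂ}

lemma cos_muF (ha : ‖a‖ ≤ 1) (t : ℝ) : Real.cos (muF a t) = ‖a‖ * Real.cos t := by
  have habs : |‖a‖ * Real.cos t| ≤ 1 := by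
    rw [abs_mul, abs_norm]
    exact mul_le_one₀ ha (abs_nonneg _) (Real.abs_cos_le_one t)
  exact Real.cos_arccos (abs_le.1 habs).1 (abs_le.1 habs).2

lemma sin_muF_sq (ha : ‖a‖ ≤ 1) (t : ℝ) :
    Real.sin (muF a t) ^ 2 = 1 - (‖a‖ * Real.cos t) ^ 2 := by
  rw [Real.sin_sq, cos_muF ha]

lemma abs_norm_mul_cos_lt_one (ha : ‖a‖ < 1) (t : ℝ) : |‖a‖ * Real.cos t| < 1 := by
  rw [abs_mul, abs_norm]
  exact mul_lt_one_of_nonneg_of_lt_one_left (norm_nonneg a) ha (Real.abs_cos_le_one t)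

lemma sin_muF_pos (ha : ‖a‖ < 1) (t : ℝ) : 0 < Real.sin (muF a t) := by
  rw [muF, Real.sin_arccos, Real.sqrt_pos, sub_pos, sq_lt_one_iff_abs_lt_one]
  exact abs_norm_mul_cos_lt_one ha t

/-- The group velocity of the walk, i.e. the derivative of the dispersion relation `muF`. -/
def groupVelocity (a : ℂ) (t : ℝ) : ℝ := ‖a‖ * Real.sin t / Real.sin (muF a t)

lemma hasDerivAt_muF (ha : ‖a‖ < 1) (t : ℝ) : HasDerivAt (muF a) (groupVelocity a t) t := by
  have habs := abs_lt.1 (abs_norm_mul_cos_lt_one ha t)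
  have hcomp := (Real.hasDerivAt_arccos habs.1.ne' habs.2.ne).comp t
    ((Real.hasDerivAt_cos t).const_mul ‖a‖)
  refine HasDerivAt.congr_deriv (f := muF a) hcomp ?_
  rw [groupVelocity, muF, Real.sin_arccos]
  ring

lemma hasDerivAt_groupVelocity (ha : ‖a‖ < 1) (t : ℝ) :
    HasDerivAt (groupVelocity a)
      ((1 - ‖a‖ ^ 2) * (‖a‖ * Real.cos t) / Real.sin (muF a t) ^ 3) t := by
  have hsin := (sin_muF_pos ha t).ne'
  have hquot := ((Real.hasDerivAt_sin t).const_mul ‖a‖).div (hasDerivAt_muF ha t).sin hsin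
  refine HasDerivAt.congr_deriv (f := groupVelocity a) hquot ?_
  rw [cos_muF ha.le, groupVelocity]
  field_simp
  rw [sin_muF_sq ha.le, mul_pow, Real.sin_sq]
  ring

lemma continuous_groupVelocity (ha : ‖a‖ < 1) : Continuous (groupVelocity a) :=
  continuous_iff_continuousAt.2 fun t => (hasDerivAt_groupVelocity ha t).continuousAt

lemma muF_neg (a : ℂ) (t : ℝ) : muF a (-t) = muF a t := by rw [muF, muF, Real.cos_neg]

lemma groupVelocity_neg (a : ℂ) (t : ℝ) : groupVelocity a (-t) = -groupVelocity a t := by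
  rw [groupVelocity, groupVelocity, muF_neg, Real.sin_neg, mul_neg, neg_div]

lemma groupVelocity_pi_sub (a : ℂ) (t : ℝ) :
    groupVelocity a (Real.pi - t) = groupVelocity a t := by
  simp only [groupVelocity, muF, Real.sin_arccos, Real.sin_pi_sub, Real.cos_pi_sub, mul_neg, neg_sq]

lemma groupVelocity_periodic (a : ℂ) : Function.Periodic (groupVelocity a) (2 * Real.pi) := by
  intro t
  simp only [groupVelocity, muF, Real.sin_add_two_pi, Real.cos_add_two_pi]

lemma groupVelocity_pi_div_two (a : ℂ) : groupVelocity a (Real.pi / 2) = ‖a‖ := by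
  simp [groupVelocity, muF]

lemma one_sub_groupVelocity_sq (ha : ‖a‖ < 1) (t : ℝ) :
    1 - groupVelocity a t ^ 2 = (1 - ‖a‖ ^ 2) / Real.sin (muF a t) ^ 2 := by
  have hsin := (sin_muF_pos ha t).ne'
  rw [groupVelocity]
  field_simp
  rw [sin_muF_sq ha.le, mul_pow, Real.sin_sq]
  ring

lemma norm_sq_sub_groupVelocity_sq (ha : ‖a‖ < 1) (t : ℝ) :
    ‖a‖ ^ 2 - groupVelocity a t ^ 2 =
      (1 - ‖a‖ ^ 2) * (‖a‖ * Real.cos t / Real.sin (muF a t)) ^ 2 := by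
  have hsin := (sin_muF_pos ha t).ne'
  rw [groupVelocity]
  field_simp
  rw [sin_muF_sq ha.le, mul_pow, Real.sin_sq]
  ring

lemma strictMonoOn_groupVelocity (ha₀ : a ≠ 0) (ha : ‖a‖ < 1) :
    StrictMonoOn (groupVelocity a) (Set.Icc (-(Real.pi / 2)) (Real.pi / 2)) := by
  refine strictMonoOn_of_hasDerivWithinAt_pos (convex_Icc _ _)
    (continuous_groupVelocity ha).continuousOn
    (fun t _ => (hasDerivAt_groupVelocity ha t).hasDerivWithinAt) fun t ht => ?_
  rw [interior_Icc] at ht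
  have hgap : 0 < 1 - ‖a‖ ^ 2 := sub_pos.2 (pow_lt_one₀ (norm_nonneg a) ha two_ne_zero)
  exact div_pos (mul_pos hgap (mul_pos (norm_pos_iff.2 ha₀) (Real.cos_pos_of_mem_Ioo ht)))
    (pow_pos (sin_muF_pos ha t) 3)

lemma image_groupVelocity_Ioo (ha₀ : a ≠ 0) (ha : ‖a‖ < 1) :
    groupVelocity a '' Set.Ioo (-(Real.pi / 2)) (Real.pi / 2) = Set.Ioo (-‖a‖) ‖a‖ := by
  rw [ContinuousOn.image_Ioo_of_strictMonoOn (by linarith [Real.pi_pos])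
    (continuous_groupVelocity ha).continuousOn (strictMonoOn_groupVelocity ha₀ ha),
    groupVelocity_neg, groupVelocity_pi_div_two]

end Dispersion

section MomentumDynamics

variable {a b : ℂ}

lemma norm_lt_one_of_sq_add_sq (h : ‖a‖ ^ 2 + ‖b‖ ^ 2 = 1) (hb : b ≠ 0) : ‖a‖ < 1 := by
  have hb' : 0 < ‖b‖ ^ 2 := by positivity
  nlinarith [norm_nonneg a]

lemma norm_toLp_sq (φ : ℂ × ℂ) : ‖(WithLp.toLp 2 φ : Spinor)‖ ^ 2 = nsq φ :=
  WithLp.prod_norm_sq_eq_of_L2 _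

lemma mul_exp_neg_add_arg (a : ℂ) (t : ℝ) :
    a * Complex.exp (-((t + a.arg : ℝ) * Complex.I)) = ‖a‖ * Complex.exp (-(t * Complex.I)) := by
  have hexp : Complex.exp (a.arg * Complex.I) * Complex.exp (-((t + a.arg : ℝ) * Complex.I)) =
      Complex.exp (-(t * Complex.I)) := by
    rw [← Complex.exp_add]
    push_cast
    ring_nf
  conv_lhs => rw [← Complex.norm_mul_exp_arg_mul_I a]
  rw [mul_assoc, Complex.norm_mul_exp_arg_mul_I, hexp]

lemma re_ofReal_mul_exp_neg (r t : ℝ) :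
    ((r : ℂ) * Complex.exp (-(t * Complex.I))).re = r * Real.cos t := by
  rw [← neg_mul, ← Complex.ofReal_neg, Complex.re_ofReal_mul, Complex.exp_ofReal_mul_I_re,
    Real.cos_neg]

lemma im_ofReal_mul_exp_neg (r t : ℝ) :
    ((r : ℂ) * Complex.exp (-(t * Complex.I))).im = -(r * Real.sin t) := by
  rw [← neg_mul, ← Complex.ofReal_neg, Complex.im_ofReal_mul, Complex.exp_ofReal_mul_I_im,
    Real.sin_neg, mul_neg]

lemma norm_sq_add_norm_sq_momentum (h : ‖a‖ ^ 2 + ‖b‖ ^ 2 = 1) (t : ℝ) :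
    ‖a * Complex.exp (-(t * Complex.I))‖ ^ 2 + ‖b * Complex.exp (t * Complex.I)‖ ^ 2 = 1 := by
  rw [norm_mul, norm_mul, ← neg_mul, ← Complex.ofReal_neg, Complex.norm_exp_ofReal_mul_I,
    Complex.norm_exp_ofReal_mul_I, mul_one, mul_one, h]

lemma norm_momentumCoin (h : ‖a‖ ^ 2 + ‖b‖ ^ 2 = 1) (t : ℝ) (u : Spinor) :
    ‖momentumCoin a b t u‖ = ‖u‖ :=
  norm_coin (norm_sq_add_norm_sq_momentum h t) u

/-- The momentum is shifted by `arg a` so that the eigenvalues `e^{±i muF a t}` appear. -/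
lemma momentumCoin_momentumCoin (h : ‖a‖ ^ 2 + ‖b‖ ^ 2 = 1) (ha : ‖a‖ ≤ 1) (t : ℝ) (u : Spinor) :
    momentumCoin a b (t + a.arg) (momentumCoin a b (t + a.arg) u) =
      (2 * Real.cos (muF a t) : ℂ) • momentumCoin a b (t + a.arg) u - u := by
  rw [momentumCoin, coin_coin (norm_sq_add_norm_sq_momentum h _), mul_exp_neg_add_arg,
    re_ofReal_mul_exp_neg, cos_muF ha]

/-- The component in quadrature with the initial state `φ` of the oscillation performed by the
state of the walk at momentum `t + arg a`. -/
def momentumQuadrature (a b : ℂ) (φ : ℂ × ℂ) (t : ℝ) : Spinor :=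
  quadrature (momentumCoin a b (t + a.arg)) (muF a t) (WithLp.toLp 2 φ)

lemma momentumState_add_arg (h : ‖a‖ ^ 2 + ‖b‖ ^ 2 = 1) (ha : ‖a‖ < 1) (φ : ℂ × ℂ) (n : ℕ)
    (t : ℝ) :
    momentumState a b φ n (t + a.arg) =
      sinusoid (WithLp.toLp 2 φ) (momentumQuadrature a b φ t) (n * muF a t) := by
  rw [momentumState_eq_iterate]
  exact iterate_eq_sinusoid (sin_muF_pos ha t).ne' (momentumCoin_momentumCoin h ha.le t) _ n

lemma inQuadrature_momentumQuadrature (h : ‖a‖ ^ 2 + ‖b‖ ^ 2 = 1) (ha : ‖a‖ < 1) (φ : ℂ × ℂ)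
    (t : ℝ) : InQuadrature (WithLp.toLp 2 φ) (momentumQuadrature a b φ t) :=
  inQuadrature_quadrature (sin_muF_pos ha t).ne' (norm_momentumCoin h _)
    (momentumCoin_momentumCoin h ha.le t) _

lemma continuous_momentumQuadrature (ha : ‖a‖ < 1) (b : ℂ) (φ : ℂ × ℂ) :
    Continuous (momentumQuadrature a b φ) := by
  have hmu : Continuous (muF a) := by unfold muF; fun_prop
  have hcoin : Continuous fun t => momentumCoin a b (t + a.arg) (WithLp.toLp 2 φ) :=
    (WithLp.prod_continuous_toLp 2 ℂ ℂ).comp (by fun_prop)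
  have hsin (t : ℝ) : (Real.sin (muF a t) : ℂ) ≠ 0 :=
    Complex.ofReal_ne_zero.2 (sin_muF_pos ha t).ne'
  unfold momentumQuadrature quadrature
  fun_prop (disch := exact hsin _)

lemma norm_momentumState (h : ‖a‖ ^ 2 + ‖b‖ ^ 2 = 1) (φ : ℂ × ℂ) (n : ℕ) (t : ℝ) :
    ‖momentumState a b φ n t‖ = ‖(WithLp.toLp 2 φ : Spinor)‖ := by
  rw [momentumState_eq_iterate]
  induction n with
  | zero => rfl
  | succ n ih => rw [Function.iterate_succ_apply', norm_momentumCoin h, ih]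

lemma lamA_eq (a b : ℂ) (φ : ℂ × ℂ) :
    lamA a b φ = ‖φ.2‖ ^ 2 - ‖φ.1‖ ^ 2 + 2 * (a * b * conj φ.1 * φ.2).re / ‖a‖ ^ 2 := by
  have hconj : conj a * conj b * φ.1 * conj φ.2 = conj (a * b * conj φ.1 * φ.2) := by
    simp only [map_mul, Complex.conj_conj]
  rw [lamA, hconj, Complex.add_re, Complex.conj_re, two_mul]

lemma mul_exp_add_arg (ha₀ : a ≠ 0) (b : ℂ) (t : ℝ) :
    b * Complex.exp ((t + a.arg : ℝ) * Complex.I) =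
      (‖a‖⁻¹ : ℝ) * (a * b * Complex.exp (t * Complex.I)) := by
  have harg : Complex.exp (a.arg * Complex.I) = (‖a‖⁻¹ : ℝ) * a := by
    conv_rhs => rw [← Complex.norm_mul_exp_arg_mul_I a]
    rw [← mul_assoc, ← Complex.ofReal_mul, Complex.norm_mul_exp_arg_mul_I,
      inv_mul_cancel₀ (norm_ne_zero_iff.2 ha₀), Complex.ofReal_one, one_mul]
  rw [Complex.ofReal_add, add_mul, Complex.exp_add, harg]
  ring

lemma inner_momentumQuadrature (ha₀ : a ≠ 0) (ha : ‖a‖ < 1) (b : ℂ) (φ : ℂ × ℂ) (t : ℝ) :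
    ⟪(WithLp.toLp 2 φ : Spinor), momentumQuadrature a b φ t⟫_ℂ =
      Complex.I * (lamA a b φ * groupVelocity a t + 2 * (a * b * conj φ.1 * φ.2).im / ‖a‖ *
        (Real.cos t / Real.sin (muF a t)) : ℝ) := by
  have hr : ‖a‖ ≠ 0 := norm_ne_zero_iff.2 ha₀
  have hsin := (sin_muF_pos ha t).ne'
  set Φ : Spinor := WithLp.toLp 2 φ
  set X := a * b * conj φ.1 * φ.2 with hX
  have hself : ⟪Φ, Φ⟫_ℂ = ‖Φ‖ ^ 2 := inner_self_eq_norm_sq_to_K Φ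
  have hβ : b * Complex.exp ((t + a.arg : ℝ) * Complex.I) * conj φ.1 * φ.2 =
      (‖a‖⁻¹ : ℝ) * (X * Complex.exp (t * Complex.I)) := by
    rw [mul_exp_add_arg ha₀, hX]
    ring
  have hcoin : ⟪Φ, momentumCoin a b (t + a.arg) Φ⟫_ℂ = Real.cos (muF a t) * ‖Φ‖ ^ 2 +
      Complex.I * (‖a‖ * Real.sin t * (‖φ.2‖ ^ 2 - ‖φ.1‖ ^ 2) +
        2 / ‖a‖ * (X.re * Real.sin t + X.im * Real.cos t) : ℝ) := by
    rw [momentumCoin, inner_coin, mul_exp_neg_add_arg, re_ofReal_mul_exp_neg,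
      im_ofReal_mul_exp_neg, cos_muF ha.le, WithLp.toLp_fst, WithLp.toLp_snd, hβ,
      Complex.im_ofReal_mul, Complex.mul_im, Complex.exp_ofReal_mul_I_re,
      Complex.exp_ofReal_mul_I_im]
    congr 3
    ring
  rw [momentumQuadrature, quadrature, inner_smul_right, inner_sub_right, inner_smul_right, hcoin,
    hself, add_sub_cancel_left, mul_left_comm, ← Complex.ofReal_inv, ← Complex.ofReal_mul,
    lamA_eq, groupVelocity]
  congr 2
  field_simp
  ring

end MomentumDynamics

section KonnoMeasure

variable {a b : ℂ} {φ : ℂ × ℂ}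

/-- The density of Konno's limit law for the rescaled position of the walk, meaningful on
`(-‖a‖, ‖a‖)` only. -/
def konnoDensity (a b : ℂ) (φ : ℂ × ℂ) (ξ : ℝ) : ℝ :=
  ‖b‖ * (1 + lamA a b φ * ξ) / (Real.pi * (1 - ξ ^ 2) * Real.sqrt (‖a‖ ^ 2 - ξ ^ 2))

/-- Konno's limit law for the rescaled position of the walk. -/
def konnoMeasure (a b : ℂ) (φ : ℂ × ℂ) : Measure ℝ :=
  (volume.restrict (Set.Ioo (-‖a‖) ‖a‖)).withDensity fun ξ => ENNReal.ofReal (konnoDensity a b φ ξ)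

lemma abs_lamA_mul_norm_le_one (ha₀ : a ≠ 0) (h : ‖a‖ ^ 2 + ‖b‖ ^ 2 = 1) (ha : ‖a‖ < 1)
    (hφ : nsq φ = 1) : |lamA a b φ * ‖a‖| ≤ 1 := by
  have hle := (inQuadrature_momentumQuadrature h ha φ (Real.pi / 2)).norm_inner_le
  rw [inner_momentumQuadrature ha₀ ha, norm_toLp_sq, hφ, groupVelocity_pi_div_two,
    Real.cos_pi_div_two, zero_div, mul_zero, add_zero, norm_mul, Complex.norm_I, one_mul,
    Complex.norm_real] at hle
  exact hle

lemma konnoDensity_nonneg (ha₀ : a ≠ 0) (h : ‖a‖ ^ 2 + ‖b‖ ^ 2 = 1) (ha : ‖a‖ < 1)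
    (hφ : nsq φ = 1) {ξ : ℝ} (hξ : ξ ∈ Set.Ioo (-‖a‖) ‖a‖) : 0 ≤ konnoDensity a b φ ξ := by
  have habs : |ξ| < ‖a‖ := abs_lt.2 hξ
  have hlam : |lamA a b φ * ξ| ≤ 1 := by
    calc |lamA a b φ * ξ| ≤ |lamA a b φ * ‖a‖| := by
          rw [abs_mul, abs_mul, abs_norm]
          gcongr
      _ ≤ 1 := abs_lamA_mul_norm_le_one ha₀ h ha hφ
  have hnum : 0 ≤ 1 + lamA a b φ * ξ := by linarith [(abs_le.1 hlam).1]
  have hden : 0 ≤ 1 - ξ ^ 2 := sub_nonneg.2 ((sq_le_one_iff_abs_le_one ξ).2 (habs.trans ha).le)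
  rw [konnoDensity]
  positivity

lemma measurable_konnoDensity (a b : ℂ) (φ : ℂ × ℂ) : Measurable (konnoDensity a b φ) := by
  unfold konnoDensity
  fun_prop

lemma deriv_groupVelocity_mul_konnoDensity (ha₀ : a ≠ 0) (h : ‖a‖ ^ 2 + ‖b‖ ^ 2 = 1)
    (ha : ‖a‖ < 1) (φ : ℂ × ℂ) {t : ℝ} (ht : t ∈ Set.Ioo (-(Real.pi / 2)) (Real.pi / 2)) :
    (1 - ‖a‖ ^ 2) * (‖a‖ * Real.cos t) / Real.sin (muF a t) ^ 3 *
        konnoDensity a b φ (groupVelocity a t) =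
      (1 + lamA a b φ * groupVelocity a t) / Real.pi := by
  have hsin := sin_muF_pos ha t
  have hcos := Real.cos_pos_of_mem_Ioo ht
  have hb : 1 - ‖a‖ ^ 2 = ‖b‖ ^ 2 := by linarith
  have hgap : 1 - ‖a‖ ^ 2 ≠ 0 := (sub_pos.2 (pow_lt_one₀ (norm_nonneg a) ha two_ne_zero)).ne'
  have hb₀ : ‖b‖ ≠ 0 := (pow_ne_zero_iff two_ne_zero).1 (hb ▸ hgap)
  have hsqrt : √(‖a‖ ^ 2 - groupVelocity a t ^ 2) =
      ‖b‖ * (‖a‖ * Real.cos t / Real.sin (muF a t)) := by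
    rw [norm_sq_sub_groupVelocity_sq ha, hb, ← mul_pow, Real.sqrt_sq (by positivity)]
  have ha' : ‖a‖ ≠ 0 := norm_ne_zero_iff.2 ha₀
  rw [konnoDensity, hsqrt, one_sub_groupVelocity_sq ha, hb]
  field_simp

lemma integral_konnoMeasure (ha₀ : a ≠ 0) (h : ‖a‖ ^ 2 + ‖b‖ ^ 2 = 1) (ha : ‖a‖ < 1)
    (hφ : nsq φ = 1) {E : Type*} [NormedAddCommGroup E] [NormedSpace ℝ E] (g : ℝ → E) :
    ∫ x, g x ∂konnoMeasure a b φ = ∫ t in (-(Real.pi / 2))..(Real.pi / 2),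
      ((1 + lamA a b φ * groupVelocity a t) / Real.pi) • g (groupVelocity a t) := by
  have hmono := (strictMonoOn_groupVelocity ha₀ ha).monotoneOn.mono Set.Ioo_subset_Icc_self
  calc ∫ x, g x ∂konnoMeasure a b φ
      = ∫ x in Set.Ioo (-‖a‖) ‖a‖, konnoDensity a b φ x • g x := by
        rw [konnoMeasure, integral_withDensity_eq_integral_toReal_smul
          (measurable_konnoDensity a b φ).ennreal_ofReal
          (.of_forall fun _ => ENNReal.ofReal_lt_top)]
        exact setIntegral_congr_fun measurableSet_Ioo fun x hx => by
          rw [ENNReal.toReal_ofReal (konnoDensity_nonneg ha₀ h ha hφ hx)]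
    _ = ∫ t in Set.Ioo (-(Real.pi / 2)) (Real.pi / 2),
          ((1 - ‖a‖ ^ 2) * (‖a‖ * Real.cos t) / Real.sin (muF a t) ^ 3) •
            konnoDensity a b φ (groupVelocity a t) • g (groupVelocity a t) := by
        rw [← image_groupVelocity_Ioo ha₀ ha]
        exact integral_image_eq_integral_deriv_smul_of_monotoneOn measurableSet_Ioo
          (fun t _ => (hasDerivAt_groupVelocity ha t).hasDerivWithinAt) hmono _
    _ = ∫ t in Set.Ioo (-(Real.pi / 2)) (Real.pi / 2),
          ((1 + lamA a b φ * groupVelocity a t) / Real.pi) • g (groupVelocity a t) :=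
        setIntegral_congr_fun measurableSet_Ioo fun t ht => by
          rw [smul_smul, deriv_groupVelocity_mul_konnoDensity ha₀ h ha φ ht]
    _ = _ := by
        rw [← integral_Ioc_eq_integral_Ioo,
          intervalIntegral.integral_of_le (by linarith [Real.pi_pos])]

lemma charFun_konnoMeasure (ha₀ : a ≠ 0) (h : ‖a‖ ^ 2 + ‖b‖ ^ 2 = 1) (ha : ‖a‖ < 1)
    (hφ : nsq φ = 1) (ξ : ℝ) :
    charFun (konnoMeasure a b φ) ξ = (Real.pi : ℂ)⁻¹ *
      ∫ t in (-(Real.pi / 2))..(Real.pi / 2), (1 + lamA a b φ * groupVelocity a t : ℝ) *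
        Complex.exp (ξ * groupVelocity a t * Complex.I) := by
  rw [charFun_apply_real, integral_konnoMeasure ha₀ h ha hφ,
    ← intervalIntegral.integral_const_mul]
  refine intervalIntegral.integral_congr fun t _ => ?_
  rw [Complex.real_smul, Complex.ofReal_div]
  ring

lemma isProbabilityMeasure_konnoMeasure (ha₀ : a ≠ 0) (h : ‖a‖ ^ 2 + ‖b‖ ^ 2 = 1) (ha : ‖a‖ < 1)
    (hφ : nsq φ = 1) : IsProbabilityMeasure (konnoMeasure a b φ) := by
  have hv := continuous_groupVelocity ha
  have hodd : Function.Odd fun t => lamA a b φ * groupVelocity a t := fun t => by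
    simp only [groupVelocity_neg, mul_neg]
  have hmass : (konnoMeasure a b φ).real Set.univ = 1 := by
    rw [← mul_one ((konnoMeasure a b φ).real Set.univ), ← smul_eq_mul, ← integral_const,
      integral_konnoMeasure ha₀ h ha hφ]
    simp only [smul_eq_mul, mul_one]
    rw [intervalIntegral.integral_div, intervalIntegral.integral_add intervalIntegrable_const
      (Continuous.intervalIntegrable (by fun_prop) _ _), intervalIntegral_eq_zero_of_odd hodd,
      intervalIntegral.integral_const, smul_eq_mul, mul_one, add_zero, sub_neg_eq_add, add_halves,
      div_self Real.pi_ne_zero]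
  exact ⟨(ENNReal.toReal_eq_one_iff _).1 hmass⟩

lemma konnoMeasure_absolutelyContinuous (a b : ℂ) (φ : ℂ × ℂ) : konnoMeasure a b φ ≪ volume :=
  (withDensity_absolutelyContinuous _ _).trans Measure.restrict_le_self.absolutelyContinuous

lemma konnoMeasure_frontier_Icc (a b : ℂ) (φ : ℂ × ℂ) {α β : ℝ} (hαβ : α ≤ β) :
    konnoMeasure a b φ (frontier (Set.Icc α β)) = 0 := by
  rw [frontier_Icc hαβ]
  exact konnoMeasure_absolutelyContinuous a b φ ((Set.toFinite _).measure_zero _)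

lemma toReal_konnoMeasure_Icc (ha₀ : a ≠ 0) (h : ‖a‖ ^ 2 + ‖b‖ ^ 2 = 1) (ha : ‖a‖ < 1)
    (hφ : nsq φ = 1) {α β : ℝ} (hα : -‖a‖ < α) (hαβ : α ≤ β) (hβ : β < ‖a‖) :
    (konnoMeasure a b φ (Set.Icc α β)).toReal = ∫ ξ in α..β, konnoDensity a b φ ξ := by
  have hsub : Set.Icc α β ⊆ Set.Ioo (-‖a‖) ‖a‖ := Set.Icc_subset_Ioo hα hβ
  have hnonneg : 0 ≤ᵐ[volume.restrict (Set.Icc α β)] konnoDensity a b φ :=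
    ae_restrict_of_forall_mem measurableSet_Icc fun ξ hξ =>
      konnoDensity_nonneg ha₀ h ha hφ (hsub hξ)
  rw [konnoMeasure, withDensity_apply _ measurableSet_Icc,
    Measure.restrict_restrict_of_subset hsub, intervalIntegral.integral_of_le hαβ,
    ← integral_Icc_eq_integral_Ioc, integral_eq_lintegral_of_nonneg_ae hnonneg
      (measurable_konnoDensity a b φ).aestronglyMeasurable]

end KonnoMeasure

section WalkLaw

variable {a b : ℂ} {φ : ℂ × ℂ}

/-- The law of the rescaled position `X_n / n` of the walk after `n` steps; `X_n` is supported in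
`[-n, n]`, and for `n = 0` the convention `x / 0 = 0` makes this the Dirac mass at `0`. -/
def walkLaw (a b : ℂ) (φ : ℂ × ℂ) (n : ℕ) : Measure ℝ :=
  ∑ y ∈ Finset.Icc (-n : ℤ) n, ENNReal.ofReal (qwP a b φ n y) • Measure.dirac ((y : ℝ) / n)

lemma qwP_nonneg (a b : ℂ) (φ : ℂ × ℂ) (n : ℕ) (y : ℤ) : 0 ≤ qwP a b φ n y := by
  rw [qwP, nsq]
  positivity

lemma charFun_walkLaw_eq_sum (a b : ℂ) (φ : ℂ × ℂ) (n : ℕ) (ξ : ℝ) :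
    charFun (walkLaw a b φ n) ξ = ∑ y ∈ Finset.Icc (-n : ℤ) n,
      qwP a b φ n y * Complex.exp ((ξ / n : ℝ) * y * Complex.I) := by
  rw [charFun_apply_real, walkLaw, integral_finsetSum_measure fun y _ =>
    (integrable_dirac (by simp)).smul_measure ENNReal.ofReal_ne_top]
  refine Finset.sum_congr rfl fun y _ => ?_
  rw [integral_smul_measure, integral_dirac, ENNReal.toReal_ofReal (qwP_nonneg a b φ n y),
    Complex.real_smul]
  congr 2
  push_cast
  ring

lemma charFun_walkLaw (a b : ℂ) (φ : ℂ × ℂ) (n : ℕ) (γ ξ : ℝ) :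
    charFun (walkLaw a b φ n) ξ = (2 * Real.pi : ℂ)⁻¹ * ∫ t in (-Real.pi)..Real.pi,
      ⟪momentumState a b φ n (t + γ), momentumState a b φ n (t + ξ / n + γ)⟫_ℂ := by
  have hsupp : (Function.support fun x =>
      (WithLp.toLp 2 ((qwStep a b)^[n] (qwDelta φ) x) : Spinor)) ⊆ Finset.Icc (-n : ℤ) n :=
    (Function.support_comp_subset rfl _).trans (support_qwStep_iterate a b φ n)
  have hpi : (2 * Real.pi : ℂ) ≠ 0 := mod_cast Real.two_pi_pos.ne'
  simp only [momentumState]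
  rw [integral_inner_fourierSum_add_right hsupp, charFun_walkLaw_eq_sum,
    inv_mul_cancel_left₀ hpi]
  simp_rw [norm_toLp_sq]
  rfl

lemma isProbabilityMeasure_walkLaw (h : ‖a‖ ^ 2 + ‖b‖ ^ 2 = 1) (hφ : nsq φ = 1) (n : ℕ) :
    IsProbabilityMeasure (walkLaw a b φ n) := by
  have hinner (t : ℝ) : ⟪momentumState a b φ n t, momentumState a b φ n t⟫_ℂ = 1 := by
    have hself : ⟪momentumState a b φ n t, momentumState a b φ n t⟫_ℂ =
        (‖momentumState a b φ n t‖ ^ 2 : ℝ) := by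
      push_cast
      exact inner_self_eq_norm_sq_to_K _
    rw [hself, norm_momentumState h, norm_toLp_sq, hφ, Complex.ofReal_one]
  have hmass : ((walkLaw a b φ n).real Set.univ : ℂ) = 1 := by
    have hpi : (Real.pi : ℂ) ≠ 0 := mod_cast Real.pi_ne_zero
    rw [← charFun_zero, charFun_walkLaw a b φ n 0 0]
    simp only [zero_div, add_zero, hinner, intervalIntegral.integral_const, Complex.real_smul]
    push_cast
    field_simp
    ring
  exact ⟨(ENNReal.toReal_eq_one_iff _).1 (by exact_mod_cast hmass)⟩

lemma continuous_momentumState (a b : ℂ) (φ : ℂ × ℂ) (n : ℕ) :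
    Continuous (momentumState a b φ n) :=
  continuous_fourierSum ((hasFiniteSupport_qwStep_iterate a b φ n).fun_comp rfl)

lemma tendsto_integral_inner_momentumState (h : ‖a‖ ^ 2 + ‖b‖ ^ 2 = 1) (ha : ‖a‖ < 1)
    (φ : ℂ × ℂ) (ξ : ℝ) :
    Tendsto (fun n : ℕ => ∫ t in (-Real.pi)..Real.pi,
        ⟪momentumState a b φ n (t + a.arg), momentumState a b φ n (t + ξ / n + a.arg)⟫_ℂ) atTop
      (𝓝 (∫ t in (-Real.pi)..Real.pi, (Real.cos (ξ * groupVelocity a t) * nsq φ +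
        Real.sin (ξ * groupVelocity a t) *
          ⟪(WithLp.toLp 2 φ : Spinor), momentumQuadrature a b φ t⟫_ℂ))) := by
  refine intervalIntegral.tendsto_integral_filter_of_dominated_convergence (fun _ => nsq φ)
    (.of_forall fun n => ?_) (.of_forall fun n => .of_forall fun t _ => ?_)
    intervalIntegrable_const (.of_forall fun t _ => ?_)
  · have hcont := continuous_momentumState a b φ n
    exact Continuous.aestronglyMeasurable (by fun_prop)
  · refine (norm_inner_le_norm _ _).trans_eq ?_
    rw [norm_momentumState h, norm_momentumState h, ← sq, norm_toLp_sq]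
  · simp_rw [momentumState_add_arg h ha, ← norm_toLp_sq φ, Complex.ofReal_pow]
    exact tendsto_inner_sinusoid (inQuadrature_momentumQuadrature h ha φ t)
      (continuous_momentumQuadrature ha b φ).continuousAt (hasDerivAt_muF ha t) ξ

lemma integral_cos_add_sin_inner (ha₀ : a ≠ 0) (ha : ‖a‖ < 1) (b : ℂ) (φ : ℂ × ℂ) (ξ : ℝ) :
    ∫ t in (-Real.pi)..Real.pi, (Real.cos (ξ * groupVelocity a t) +
        Real.sin (ξ * groupVelocity a t) *
          ⟪(WithLp.toLp 2 φ : Spinor), momentumQuadrature a b φ t⟫_ℂ) =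
      ∫ t in (-Real.pi)..Real.pi, (1 + lamA a b φ * groupVelocity a t : ℝ) *
        Complex.exp (ξ * groupVelocity a t * Complex.I) := by
  have hv := continuous_groupVelocity ha
  have hq := continuous_momentumQuadrature ha b φ
  rw [← sub_eq_zero, ← intervalIntegral.integral_sub
    (Continuous.intervalIntegrable (by fun_prop) _ _)
    (Continuous.intervalIntegrable (by fun_prop) _ _)]
  refine intervalIntegral_eq_zero_of_odd (fun t => ?_) Real.pi
  have hexp (s : ℝ) : Complex.exp (ξ * s * Complex.I) =
      Real.cos (ξ * s) + Real.sin (ξ * s) * Complex.I := by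
    rw [← Complex.ofReal_mul, Complex.exp_mul_I, Complex.ofReal_cos, Complex.ofReal_sin]
  rw [inner_momentumQuadrature ha₀ ha, inner_momentumQuadrature ha₀ ha, hexp, hexp,
    groupVelocity_neg, muF_neg, mul_neg, Real.cos_neg, Real.sin_neg, Real.cos_neg]
  push_cast
  ring

lemma tendsto_charFun_walkLaw (ha₀ : a ≠ 0) (h : ‖a‖ ^ 2 + ‖b‖ ^ 2 = 1) (ha : ‖a‖ < 1)
    (hφ : nsq φ = 1) (ξ : ℝ) :
    Tendsto (fun n => charFun (walkLaw a b φ n) ξ) atTop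
      (𝓝 (charFun (konnoMeasure a b φ) ξ)) := by
  have hlim := (tendsto_integral_inner_momentumState h ha φ ξ).const_mul (2 * Real.pi : ℂ)⁻¹
  simp only [hφ, Complex.ofReal_one, mul_one, integral_cos_add_sin_inner ha₀ ha,
    ← charFun_walkLaw] at hlim
  have hv := continuous_groupVelocity ha
  have hfold := intervalIntegral_eq_two_smul_of_periodic (c := Real.pi) (f := fun t =>
    (1 + lamA a b φ * groupVelocity a t : ℝ) * Complex.exp (ξ * groupVelocity a t * Complex.I))
    (fun _ _ => Continuous.intervalIntegrable (by fun_prop) _ _)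
    (fun t => by simp only [groupVelocity_periodic a t])
    (fun t => by simp only [groupVelocity_pi_sub])
  rw [hfold, Complex.real_smul, ← mul_assoc] at hlim
  rw [charFun_konnoMeasure ha₀ h ha hφ]
  convert hlim using 3
  push_cast
  field_simp

lemma toReal_walkLaw_Icc (a b : ℂ) (φ : ℂ × ℂ) {n : ℕ} (hn : 0 < n) {α β : ℝ} (hα : -1 ≤ α)
    (hβ : β ≤ 1) : (walkLaw a b φ n (Set.Icc α β)).toReal =
      ∑ y ∈ Finset.Icc ⌈(n : ℝ) * α⌉ ⌊(n : ℝ) * β⌋, qwP a b φ n y := by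
  have hn' : (0 : ℝ) < n := Nat.cast_pos.2 hn
  have hfilter : Finset.Icc ⌈(n : ℝ) * α⌉ ⌊(n : ℝ) * β⌋ =
      (Finset.Icc (-n : ℤ) n).filter fun y : ℤ => (y : ℝ) / n ∈ Set.Icc α β := by
    ext y
    simp only [Finset.mem_filter, Finset.mem_Icc, Set.mem_Icc, Int.ceil_le, Int.le_floor,
      le_div_iff₀' hn', div_le_iff₀' hn']
    refine ⟨fun h => ⟨⟨?_, ?_⟩, h⟩, And.right⟩
    · have : -(n : ℝ) ≤ y := by nlinarith
      exact_mod_cast this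
    · have : (y : ℝ) ≤ n := by nlinarith
      exact_mod_cast this
  simp only [hfilter, Finset.sum_filter, walkLaw, Measure.finsetSum_apply, Measure.smul_apply,
    smul_eq_mul]
  rw [ENNReal.toReal_sum fun y _ =>
    ENNReal.mul_ne_top ENNReal.ofReal_ne_top (measure_ne_top _ _)]
  refine Finset.sum_congr rfl fun y _ => ?_
  rw [Measure.dirac_apply' _ measurableSet_Icc, ENNReal.toReal_mul,
    ENNReal.toReal_ofReal (qwP_nonneg a b φ n y), Set.indicator_apply]
  split_ifs <;> simp

lemma tendsto_walkLaw_of_null_frontier (ha₀ : a ≠ 0) (h : ‖a‖ ^ 2 + ‖b‖ ^ 2 = 1) (ha : ‖a‖ < 1)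
    (hφ : nsq φ = 1) {s : Set ℝ} (hs : konnoMeasure a b φ (frontier s) = 0) :
    Tendsto (fun n => walkLaw a b φ n s) atTop (𝓝 (konnoMeasure a b φ s)) := by
  let law (n : ℕ) : ProbabilityMeasure ℝ :=
    ⟨walkLaw a b φ n, isProbabilityMeasure_walkLaw h hφ n⟩
  let limit : ProbabilityMeasure ℝ :=
    ⟨konnoMeasure a b φ, isProbabilityMeasure_konnoMeasure ha₀ h ha hφ⟩
  have hweak : Tendsto law atTop (𝓝 limit) :=
    ProbabilityMeasure.tendsto_of_tendsto_charFun (tendsto_charFun_walkLaw ha₀ h ha hφ)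
  exact ProbabilityMeasure.tendsto_measure_of_null_frontier_of_tendsto' hweak hs

end WalkLaw

/-- Corollary of Konno's theorem: the probability of finding the walk in
`[nα, nβ] ⊂ (−|a|n, |a|n)` converges to `∫_α^β ρ(ξ) dξ` with
`ρ(ξ) = |b|(1 + λ_A(φ)ξ)/(π(1 − ξ²)√(|a|² − ξ²))`. -/
theorem stmt1 (a b : ℂ) (hab1 : ‖a‖ ^ 2 + ‖b‖ ^ 2 = 1) (hab : a * b ≠ 0)
    (φ : ℂ × ℂ) (hφ : nsq φ = 1) (α β : ℝ)
    (hα : -‖a‖ < α) (hαβ : α < β) (hβ : β < ‖a‖) :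
    Tendsto
      (fun n : ℕ => ∑ y ∈ Finset.Icc ⌈(n : ℝ) * α⌉ ⌊(n : ℝ) * β⌋, qwP a b φ n y)
      atTop
      (𝓝 (∫ ξ in α..β,
        ‖b‖ * (1 + lamA a b φ * ξ) / (Real.pi * (1 - ξ ^ 2) * Real.sqrt (‖a‖ ^ 2 - ξ ^ 2)))) := by
  have ha₀ : a ≠ 0 := left_ne_zero_of_mul hab
  have ha : ‖a‖ < 1 := norm_lt_one_of_sq_add_sq hab1 (right_ne_zero_of_mul hab)
  have : IsProbabilityMeasure (konnoMeasure a b φ) :=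
    isProbabilityMeasure_konnoMeasure ha₀ hab1 ha hφ
  have hlaw : Tendsto (fun n => (walkLaw a b φ n (Set.Icc α β)).toReal) atTop
      (𝓝 (∫ ξ in α..β, konnoDensity a b φ ξ)) := by
    rw [← toReal_konnoMeasure_Icc ha₀ hab1 ha hφ hα hαβ.le hβ]
    exact (ENNReal.tendsto_toReal (measure_ne_top _ _)).comp
      (tendsto_walkLaw_of_null_frontier ha₀ hab1 ha hφ (konnoMeasure_frontier_Icc a b φ hαβ.le))
  refine hlaw.congr' ?_
  filter_upwards [eventually_gt_atTop 0] with n hn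
  exact toReal_walkLaw_Icc a b φ hn (by linarith) (by linarith)
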